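/- Let X be a Banach space, T > 0, F ∈ C^6([0,T] × X, X) satisfying ‖F(t,x) − F(t,y)‖ ≤ μ‖x − y‖ for some μ ≥ 0 and all (t,x,y) ∈ [0,T] × X × X, and suppose the initial value problem u'(t) = F(t, u(t)) on [0,T], u(0) = u₀, has a unique solution u ∈ C^7([0,T], X). Then there exist constants C > 0 and k₀ > 0 such that for every positive integer N with k = T/N ≤ k₀, the sequence {u^{6,n}}_{n=0}^{N} produced by the DC6RK2/4 scheme satisfies ‖u^{6,n} − u(t_n)‖ ≤ C k^6 for all n = 0, 1, …, N, where t_n = nk. -/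

import Mathlib

open Finset

variable {X : Type*} [NormedAddCommGroup X] [NormedSpace ℝ X] [CompleteSpace X]

/-- One step of the classical fourth-order Runge–Kutta method for `u' = F(t,u)`
from time `t` with step `h`. -/
noncomputable def rk4Step (F : ℝ → X → X) (t h : ℝ) (x : X) : X :=
  let K1 := F t x
  let K2 := F (t + h / 2) (x + (h / 2) • K1)
  let K3 := F (t + h / 2) (x + (h / 2) • K2)
  let K4 := F (t + h) (x + h • K3)
  x + (h / 6) • (K1 + (2 : ℝ) • K2 + (2 : ℝ) • K3 + K4)

/-- `i` steps of RK4 with step `h`, starting from `x` at time `t`: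
`rk4Iter F t h x i` is the approximation `u^{4,·,i}` of `u(t + i h)`. -/
noncomputable def rk4Iter (F : ℝ → X → X) (t h : ℝ) (x : X) : ℕ → X
  | 0 => x
  | i + 1 => rk4Step F (t + (i : ℝ) * h) h (rk4Iter F t h x i)

/-- The correction term `aₙ` of the DC6RK2/4 scheme, as a linear combination of the
six RK4 sub-step values `w 0, …, w 5`. -/
noncomputable def dcA (w : ℕ → X) : X :=
  (125 / 384 : ℝ) • ((-3 : ℝ) • w 0 - w 1 + (18 : ℝ) • w 2 - (18 : ℝ) • w 3
    + w 4 + (3 : ℝ) • w 5)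

/-- The correction term `bₙ` of the DC6RK2/4 scheme, as a linear combination of the
six RK4 sub-step values `w 0, …, w 5`. -/
noncomputable def dcB (w : ℕ → X) : X :=
  (25 / 768 : ℝ) • ((145 : ℝ) • w 0 - (387 : ℝ) • w 1 + (402 : ℝ) • w 2
    - (238 : ℝ) • w 3 + (93 : ℝ) • w 4 - (15 : ℝ) • w 5)

/-- One step of the hybrid deferred-correction scheme DC6RK2/4 from time `t` with
step `k` (inner RK4 step `h = k/5`). -/
noncomputable def dcStep (F : ℝ → X → X) (t k : ℝ) (x : X) : X :=
  let w : ℕ → X := rk4Iter F t (k / 5) x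
  x + dcA w + k • F (t + k / 2) (x + (k / 2) • F t x + dcB w)

/-- The DC6RK2/4 sequence `u^{6,n}` for `u' = F(t,u)`, `u(0) = u₀`, with step `k`. -/
noncomputable def dcSeq (F : ℝ → X → X) (u0 : X) (k : ℝ) : ℕ → X
  | 0 => u0
  | n + 1 => dcStep F ((n : ℝ) * k) k (dcSeq F u0 k n)

section helpers
open Filter Asymptotics Topology

variable {E : Type*} [NormedAddCommGroup E] [NormedSpace ℝ E]
variable {G : Type*} [NormedAddCommGroup G] [NormedSpace ℝ G]

/-- chain of derivatives -/
noncomputable def dchain (s : Set ℝ) (v : ℝ → E) : ℕ → ℝ → E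
  | 0 => v
  | j + 1 => dchain s (derivWithin v s) j

lemma dchain_spec {T : ℝ} (hT : 0 < T) (n : ℕ) (v : ℝ → E)
    (hv : ContDiffOn ℝ n v (Set.Icc 0 T)) :
    (∀ j m : ℕ, j + m ≤ n → ContDiffOn ℝ m (dchain (Set.Icc 0 T) v j) (Set.Icc 0 T)) ∧
    (∀ j < n, ∀ x ∈ Set.Icc 0 T,
      HasDerivWithinAt (dchain (Set.Icc 0 T) v j) (dchain (Set.Icc 0 T) v (j+1) x)
        (Set.Icc 0 T) x) := by
  induction n generalizing v with
  | zero =>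
    refine ⟨fun j m h => ?_, fun j h => by omega⟩
    obtain ⟨rfl, rfl⟩ : j = 0 ∧ m = 0 := by omega
    exact hv
  | succ n ih =>
    have hv0 := hv
    rw [Nat.cast_succ, contDiffOn_succ_iff_derivWithin (uniqueDiffOn_Icc hT)] at hv
    obtain ⟨h1, h2⟩ := ih _ hv.2.2
    refine ⟨fun j m h => ?_, fun j h => ?_⟩
    · cases j with
      | zero => exact hv0.of_le (by exact_mod_cast (by omega : m ≤ n + 1))
      | succ j => exact h1 j m (by omega)
    · cases j with
      | zero => exact fun x hx => (hv.1 x hx).hasDerivWithinAt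
      | succ j => exact h2 j (by omega)

lemma taylor_bd (s : Set ℝ) (hs : Convex ℝ s) (M : ℝ) (n : ℕ) (v : ℕ → ℝ → E)
    (hd : ∀ j < n, ∀ x ∈ s, HasDerivWithinAt (v j) (v (j+1) x) s x)
    (hM : ∀ x ∈ s, ‖v n x‖ ≤ M) :
    ∀ x ∈ s, ∀ y ∈ s, ‖v 0 y - ∑ j ∈ Finset.range n,
      ((y - x) ^ j / (j.factorial : ℝ)) • v j x‖ ≤ M * |y - x| ^ n := by
  induction n generalizing v with
  | zero => intro x hx y hy; simpa using hM y hy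
  | succ n ih =>
    intro x hx y hy
    have ih' := ih (fun j => v (j+1)) (fun j hj => hd (j+1) (by omega)) hM x hx
    have hsub : segment ℝ x y ⊆ s := hs.segment_subset hx hy
    have hder : ∀ z ∈ segment ℝ x y, HasDerivWithinAt
        (fun y => v 0 y - ∑ j ∈ Finset.range (n+1), ((y - x) ^ j / (j.factorial : ℝ)) • v j x)
        (v 1 z - ∑ j ∈ Finset.range n, ((z - x) ^ j / (j.factorial : ℝ)) • v (j+1) x)
        (segment ℝ x y) z := by
      intro z hz
      have h0 := (hd 0 (by omega) z (hsub hz)).mono hsub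
      refine h0.sub ?_
      simp only [Finset.sum_range_succ']
      have : ∑ j ∈ Finset.range n, ((z - x) ^ j / (j.factorial : ℝ)) • v (j+1) x =
        ∑ j ∈ Finset.range n, ((z - x) ^ j / (j.factorial : ℝ)) • v (j+1) x + 0 := by simp
      rw [this]
      refine HasDerivWithinAt.add ?_ ?_
      · refine HasDerivWithinAt.fun_sum fun j _ => ?_
        refine HasDerivWithinAt.smul_const ?_ _
        have h1 : HasDerivAt (fun y : ℝ => (y - x) ^ (j+1) / ((j+1).factorial : ℝ))
            (((j+1 : ℕ) : ℝ) * (z - x) ^ j * 1 / ((j+1).factorial : ℝ)) z :=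
          (((hasDerivAt_id z).sub_const x).pow (j+1)).div_const _
        refine h1.hasDerivWithinAt.congr_deriv ?_
        rw [Nat.factorial_succ]
        push_cast
        field_simp
      · simpa using hasDerivWithinAt_const z (segment ℝ x y) (v 0 x)
    have hb : ∀ z ∈ segment ℝ x y,
        ‖v 1 z - ∑ j ∈ Finset.range n, ((z - x) ^ j / (j.factorial : ℝ)) • v (j+1) x‖
          ≤ M * |y - x| ^ n := by
      intro z hz
      refine (ih' z (hsub hz)).trans ?_
      have hM0 : 0 ≤ M := (norm_nonneg _).trans (hM x hx)
      have : |z - x| ≤ |y - x| := by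
        have := segment_eq_uIcc x y ▸ hz
        exact Set.abs_sub_left_of_mem_uIcc this
      gcongr
    have := (convex_segment x y).norm_image_sub_le_of_norm_hasDerivWithin_le hder hb
      (left_mem_segment ℝ x y) (right_mem_segment ℝ x y)
    have e : (v 0 x - ∑ j ∈ Finset.range (n+1), ((x - x) ^ j / (j.factorial : ℝ)) • v j x) = 0 := by
      simp [Finset.sum_range_succ']
    simp only [e, sub_zero] at this
    rw [pow_succ, ← mul_assoc]
    simpa using this

lemma taylor_Icc {T : ℝ} (hT : 0 < T) (n : ℕ) (v : ℝ → E)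
    (hv : ContDiffOn ℝ n v (Set.Icc 0 T)) :
    ∃ M : ℝ, ∀ x ∈ Set.Icc 0 T, ∀ y ∈ Set.Icc 0 T, ‖v y - ∑ j ∈ Finset.range n,
      ((y - x) ^ j / (j.factorial : ℝ)) • dchain (Set.Icc 0 T) v j x‖ ≤ M * |y - x| ^ n := by
  obtain ⟨h1, h2⟩ := dchain_spec hT n v hv
  obtain ⟨M, hM⟩ := isCompact_Icc.exists_bound_of_continuousOn (h1 n 0 (by omega)).continuousOn
  exact ⟨M, taylor_bd _ (convex_Icc 0 T) M n (dchain (Set.Icc 0 T) v) h2 hM⟩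

/-- partial derivative in the second variable -/
lemma partial_deriv {T : ℝ} (hT : 0 < T) (n : ℕ) (f : ℝ × G → E)
    (hf : ContDiffOn ℝ (n + 1 : ℕ) f (Set.Icc 0 T ×ˢ (Set.univ : Set G))) :
    ∃ f' : ℝ × G → (G →L[ℝ] E),
      ContDiffOn ℝ n f' (Set.Icc 0 T ×ˢ (Set.univ : Set G)) ∧
      ∀ s ∈ Set.Icc 0 T, ∀ x, HasFDerivAt (fun y => f (s, y)) (f' (s, x)) x := by
  have hU : UniqueDiffOn ℝ (Set.Icc 0 T ×ˢ (Set.univ : Set G)) :=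
    (uniqueDiffOn_Icc hT).prod uniqueDiffOn_univ
  refine ⟨fun p => (fderivWithin ℝ f (Set.Icc 0 T ×ˢ (Set.univ : Set G)) p).comp
    (ContinuousLinearMap.inr ℝ ℝ G), ?_, ?_⟩
  · have h1 := hf.fderivWithin hU (m := n) (by simp)
    exact h1.clm_comp contDiffOn_const
  · intro s hs x
    have h1 := ((hf.differentiableOn (by simp)) (s, x) ⟨hs, trivial⟩).hasFDerivWithinAt
    have h2 : HasFDerivAt (fun y : G => (s, y)) (ContinuousLinearMap.inr ℝ ℝ G) x :=
      hasFDerivAt_prodMk_right s x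
    have := h1.comp (s := Set.univ) x h2.hasFDerivWithinAt (fun y _ => ⟨hs, trivial⟩)
    rwa [hasFDerivWithinAt_univ] at this

lemma bdd_near {T : ℝ} (u : ℝ → G) (hu : ContinuousOn u (Set.Icc 0 T)) (f : ℝ × G → E)
    (hf : ContinuousOn f (Set.Icc 0 T ×ˢ (Set.univ : Set G))) :
    ∃ r > 0, ∃ M : ℝ, ∀ s ∈ Set.Icc 0 T, ∀ δ : G, ‖δ‖ ≤ r → ‖f (s, u s + δ)‖ ≤ M := by
  have hg : ContinuousOn (fun p : ℝ × G => f (p.1, u p.1 + p.2))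
      (Set.Icc 0 T ×ˢ (Set.univ : Set G)) := by
    refine hf.comp (continuousOn_fst.prodMk (ContinuousOn.add ?_ continuousOn_snd)) ?_
    · exact hu.comp continuousOn_fst (fun p hp => hp.1)
    · exact fun p hp => ⟨hp.1, trivial⟩
  obtain ⟨M, hM⟩ := isCompact_Icc.exists_bound_of_continuousOn (s := Set.Icc 0 T)
    (f := fun s => f (s, u s + 0))
    (hg.comp (f := fun s : ℝ => (s, (0:G))) (by fun_prop) (fun s hs => ⟨hs, trivial⟩))
  have hn : {p : ℝ × G | ‖f (p.1, u p.1 + p.2)‖ < M + 1} ∈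
      𝓝ˢ[Set.Icc 0 T ×ˢ (Set.univ : Set G)] (Set.Icc 0 T ×ˢ ({0} : Set G)) := by
    rw [mem_nhdsSetWithin]
    obtain ⟨U, hU, hU2⟩ := continuousOn_iff'.1 hg.norm (Set.Iio (M+1)) isOpen_Iio
    refine ⟨U, hU, ?_, ?_⟩
    · rintro ⟨s, δ⟩ ⟨hs, hδ⟩
      have : δ = 0 := hδ
      subst this
      have : ((s, (0:G)) : ℝ × G) ∈ (fun p : ℝ × G => ‖f (p.1, u p.1 + p.2)‖) ⁻¹' (Set.Iio (M+1)) ∩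
        Set.Icc 0 T ×ˢ (Set.univ : Set G) :=
          ⟨by simpa using (hM s hs).trans_lt (lt_add_one M), hs, trivial⟩
      rw [hU2] at this
      exact this.1
    · intro p hp
      rw [← hU2] at hp
      exact hp.1
  obtain ⟨v, hv, hv2⟩ := generalized_tube_lemma_right isCompact_Icc isCompact_singleton hn
  rw [nhdsSetWithin_univ, nhdsSet_singleton, Metric.nhds_basis_closedBall.mem_iff] at hv
  obtain ⟨r, hr, hrv⟩ := hv
  refine ⟨r, hr, M + 1, fun s hs δ hδ => ?_⟩
  have : (s, δ) ∈ (Set.Icc 0 T) ×ˢ v := ⟨hs, hrv (by simpa using hδ)⟩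
  exact (le_of_lt (hv2 this : ‖f (s, u s + δ)‖ < M + 1))

lemma F_expand {T : ℝ} (hT : 0 < T) (F : ℝ → G → E)
    (hF : ContDiffOn ℝ 6 (Function.uncurry F) (Set.Icc 0 T ×ˢ (Set.univ : Set G)))
    (u : ℝ → G) (hu : ContDiffOn ℝ 7 u (Set.Icc 0 T)) :
    ∃ A : ℝ → G →L[ℝ] E, ∃ B : ℝ → G →L[ℝ] G →L[ℝ] E,
      ContDiffOn ℝ 4 A (Set.Icc 0 T) ∧ ContDiffOn ℝ 4 B (Set.Icc 0 T) ∧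
      ∃ r > 0, ∃ M : ℝ, ∀ s ∈ Set.Icc 0 T, ∀ δ : G, ‖δ‖ ≤ r →
        ‖F s (u s + δ) - (F s (u s) + A s δ + (1/2 : ℝ) • B s δ δ)‖ ≤ M * ‖δ‖ ^ 3 := by
  obtain ⟨f1, hf1, h1⟩ := partial_deriv hT 5 _ hF
  obtain ⟨f2, hf2, h2⟩ := partial_deriv hT 4 _ hf1
  obtain ⟨f3, hf3, h3⟩ := partial_deriv hT 3 _ hf2
  obtain ⟨r, hr, M, hM⟩ := bdd_near u hu.continuousOn f3 hf3.continuousOn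
  have hmap : ContDiffOn ℝ 4 (fun s => (s, u s)) (Set.Icc 0 T) :=
    contDiffOn_id.prodMk (hu.of_le (by norm_num))
  have hmt : Set.MapsTo (fun s => (s, u s)) (Set.Icc 0 T) (Set.Icc 0 T ×ˢ (Set.univ : Set G)) :=
    fun s hs => ⟨hs, trivial⟩
  refine ⟨fun s => f1 (s, u s), fun s => f2 (s, u s),
    (hf1.of_le (by norm_num)).comp hmap hmt, hf2.comp hmap hmt, r, hr, M, ?_⟩
  intro s hs δ hδ
  have key := taylor_bd (E := E) (Set.Icc 0 1) (convex_Icc 0 1) (M * ‖δ‖^3) 3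
    (fun j τ => match j with
      | 0 => F s (u s + τ • δ)
      | 1 => f1 (s, u s + τ • δ) δ
      | 2 => f2 (s, u s + τ • δ) δ δ
      | _ => f3 (s, u s + τ • δ) δ δ δ) ?_ ?_ 0 (by simp) 1 (by simp)
  · simp [Finset.sum_range_succ] at key
    simpa using key
  · have hl : ∀ x : ℝ, HasDerivAt (fun τ : ℝ => u s + τ • δ) δ x := fun x => by
      simpa using ((hasDerivAt_id x).smul_const δ).const_add (u s)
    intro j hj x hx
    apply HasDerivAt.hasDerivWithinAt
    interval_cases j
    · exact (h1 s hs _).comp_hasDerivAt x (hl x)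
    · exact ((h2 s hs _).comp_hasDerivAt x (hl x)).clm_apply (hasDerivAt_const x δ)
        |>.congr_deriv (by simp)
    · exact (((h3 s hs _).comp_hasDerivAt x (hl x)).clm_apply (hasDerivAt_const x δ)).clm_apply
        (hasDerivAt_const x δ) |>.congr_deriv (by simp)
  · intro x hx
    have hx' : ‖x • δ‖ ≤ r := by
      rw [norm_smul, Real.norm_eq_abs, abs_of_nonneg hx.1]
      exact (mul_le_of_le_one_left (norm_nonneg _) hx.2).trans hδ
    have hb := hM s hs _ hx'
    calc ‖f3 (s, u s + x • δ) δ δ δ‖ ≤ ‖f3 (s, u s + x • δ)‖ * ‖δ‖ * ‖δ‖ * ‖δ‖ :=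
          ContinuousLinearMap.le_of_opNorm_le _ (ContinuousLinearMap.le_of_opNorm_le _
            ((f3 (s, u s + x • δ)).le_opNorm δ) δ) δ
      _ ≤ M * ‖δ‖ * ‖δ‖ * ‖δ‖ := by gcongr
      _ = M * ‖δ‖^3 := by ring

lemma pow_bigO {ι : Type*} {l : Filter ι} {h : ι → ℝ} (hh : Tendsto h l (𝓝 0)) {m n : ℕ}
    (hmn : n ≤ m) : (fun i => h i ^ m) =O[l] (fun i => h i ^ n) := by
  obtain ⟨k, rfl⟩ := Nat.exists_eq_add_of_le hmn
  have h1 : (fun i => h i ^ k) =O[l] (fun _ => (1:ℝ)) := (hh.pow k).isBigO_one ℝ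
  simpa [pow_add] using (isBigO_refl (fun i => h i ^ n) l).mul h1

lemma clm_bigO {ι : Type*} {l : Filter ι} {A : ι → G →L[ℝ] E} {x : ι → G} {α β : ι → ℝ}
    (hA : A =O[l] α) (hx : x =O[l] β) : (fun i => A i (x i)) =O[l] (fun i => α i * β i) := by
  have h1 : (fun i => A i (x i)) =O[l] (fun i => ‖A i‖ * ‖x i‖) :=
    IsBigO.of_bound 1 (Eventually.of_forall fun i => by
      simpa using (A i).le_opNorm (x i))
  exact h1.trans (hA.norm_left.mul hx.norm_left)

/-- the basic filter -/
def flt (T : ℝ) : Filter (ℝ × ℝ) :=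
  𝓟 {p | 0 ≤ p.1 ∧ 0 ≤ p.2 ∧ p.1 + p.2 ≤ T} ⊓ comap Prod.snd (𝓝 0)

lemma flt_tendsto (T : ℝ) : Tendsto (fun p : ℝ × ℝ => p.2) (flt T) (𝓝 0) :=
  (tendsto_comap (f := Prod.snd)).mono_left inf_le_right

lemma flt_ev (T : ℝ) : ∀ᶠ p in flt T, 0 ≤ p.1 ∧ 0 ≤ p.2 ∧ p.1 + p.2 ≤ T :=
  (show flt T ≤ _ from inf_le_left) (mem_principal_self _)

lemma flt_mem {T : ℝ} {α : ℝ} (h0 : 0 ≤ α) (h1 : α ≤ 1) :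
    ∀ᶠ p in flt T, p.1 ∈ Set.Icc 0 T ∧ p.1 + α * p.2 ∈ Set.Icc 0 T := by
  filter_upwards [flt_ev T] with p hp
  obtain ⟨a, b, c⟩ := hp
  have := mul_nonneg h0 b
  have := mul_le_of_le_one_left b h1
  exact ⟨⟨a, by linarith⟩, ⟨by linarith, by linarith⟩⟩

lemma bdd_coef {T : ℝ} {a : ℝ → E} (ha : ContinuousOn a (Set.Icc 0 T)) :
    (fun p : ℝ × ℝ => a p.1) =O[flt T] (fun _ => (1:ℝ)) := by
  obtain ⟨M, hM⟩ := isCompact_Icc.exists_bound_of_continuousOn ha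
  refine IsBigO.of_bound M ?_
  filter_upwards [flt_mem (T := T) zero_le_one le_rfl] with p hp
  simpa using hM _ hp.1

/-- expansion of length four, offset `m`, first two coefficients `a`, `b` -/
def IsJ (T : ℝ) (m : ℕ) (f : ℝ × ℝ → E) (a b : ℝ → E) : Prop :=
  ContDiffOn ℝ 2 a (Set.Icc 0 T) ∧ ContDiffOn ℝ 2 b (Set.Icc 0 T) ∧
  ∃ c d : ℝ → E, ContDiffOn ℝ 2 c (Set.Icc 0 T) ∧ ContDiffOn ℝ 1 d (Set.Icc 0 T) ∧
    (fun p : ℝ × ℝ => f p - p.2 ^ m • (a p.1 + p.2 • b p.1 + p.2 ^ 2 • c p.1 + p.2 ^ 3 • d p.1))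
      =O[flt T] (fun p => p.2 ^ (m + 4))

variable {T : ℝ} {m n : ℕ} {f g : ℝ × ℝ → E} {a b a' b' : ℝ → E}

lemma IsJ.of_eq (hf : IsJ T m f a b) (hfg : ∀ᶠ p in flt T, f p = g p)
    (ha : ∀ s, a s = a' s) (hb : ∀ s, b s = b' s) : IsJ T m g a' b' := by
  obtain rfl : a = a' := funext ha
  obtain rfl : b = b' := funext hb
  obtain ⟨h1, h2, c, d, h3, h4, h5⟩ := hf
  refine ⟨h1, h2, c, d, h3, h4, h5.congr' ?_ EventuallyEq.rfl⟩
  filter_upwards [hfg] with p hp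
  rw [hp]

lemma IsJ.add (hf : IsJ T m f a b) (hg : IsJ T m g a' b') :
    IsJ T m (fun p => f p + g p) (fun s => a s + a' s) (fun s => b s + b' s) := by
  obtain ⟨h1, h2, c, d, h3, h4, h5⟩ := hf
  obtain ⟨h1', h2', c', d', h3', h4', h5'⟩ := hg
  refine ⟨h1.add h1', h2.add h2', fun s => c s + c' s, fun s => d s + d' s, h3.add h3', h4.add h4',
    (h5.add h5').congr_left fun p => ?_⟩
  module

lemma IsJ.smul (hf : IsJ T m f a b) (r : ℝ) :
    IsJ T m (fun p => r • f p) (fun s => r • a s) (fun s => r • b s) := by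
  obtain ⟨h1, h2, c, d, h3, h4, h5⟩ := hf
  refine ⟨h1.const_smul r, h2.const_smul r, fun s => r • c s, fun s => r • d s, h3.const_smul r,
    h4.const_smul r, (h5.const_smul_left r).congr_left fun p => ?_⟩
  simp only [Pi.smul_apply]
  module

lemma IsJ.hsmul (hf : IsJ T m f a b) :
    IsJ T (m+1) (fun p => p.2 • f p) a b := by
  obtain ⟨h1, h2, c, d, h3, h4, h5⟩ := hf
  refine ⟨h1, h2, c, d, h3, h4, ?_⟩
  refine ((isBigO_refl (fun p : ℝ × ℝ => p.2) (flt T)).smul h5).congr (fun p => ?_) (fun p => ?_)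
  · module
  · simp only [smul_eq_mul]; ring

lemma IsJ.lower (hf : IsJ T (m+1) f a b) : IsJ T m f (fun _ => 0) a := by
  obtain ⟨h1, h2, c, d, h3, h4, h5⟩ := hf
  refine ⟨contDiffOn_const, h1, b, c, h2, h3.of_le (by norm_num), ?_⟩
  have hd := (pow_bigO (flt_tendsto T) (le_refl (m+4))).smul (bdd_coef h4.continuousOn)
  refine ((h5.trans (pow_bigO (flt_tendsto T) (by omega : m + 4 ≤ m + 1 + 4))).add
    (hd.congr_right (fun p => by simp))).congr_left fun p => ?_
  module

lemma IsJ.of_bigO (hf : f =O[flt T] (fun p => p.2 ^ (m+4))) :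
    IsJ T m f (fun _ => 0) (fun _ => 0) := by
  refine ⟨contDiffOn_const, contDiffOn_const, fun _ => 0, fun _ => 0, contDiffOn_const,
    contDiffOn_const, ?_⟩
  simpa using hf

lemma poly_bigO {a b c d : ℝ → E} (ha : ContinuousOn a (Set.Icc 0 T))
    (hb : ContinuousOn b (Set.Icc 0 T))
    (hc : ContinuousOn c (Set.Icc 0 T)) (hd : ContinuousOn d (Set.Icc 0 T)) :
    (fun p : ℝ × ℝ => a p.1 + p.2 • b p.1 + p.2 ^ 2 • c p.1 + p.2 ^ 3 • d p.1) =O[flt T]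
      (fun _ => (1:ℝ)) := by
  have h1 : ∀ k : ℕ, (fun p : ℝ × ℝ => p.2 ^ k) =O[flt T] (fun _ => (1:ℝ)) := fun k => by
    simpa using pow_bigO (flt_tendsto T) (Nat.zero_le k)
  have := ((h1 0).smul (bdd_coef ha)).add ((h1 1).smul (bdd_coef hb)) |>.add
    ((h1 2).smul (bdd_coef hc)) |>.add ((h1 3).smul (bdd_coef hd))
  simpa using this

lemma IsJ.bigO (hf : IsJ T m f a b) : f =O[flt T] (fun p => p.2 ^ m) := by
  obtain ⟨h1, h2, c, d, h3, h4, h5⟩ := hf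
  have hP := poly_bigO h1.continuousOn h2.continuousOn h3.continuousOn h4.continuousOn
  have := (isBigO_refl (fun p : ℝ × ℝ => p.2 ^ m) (flt T)).smul hP
  refine ((h5.trans (pow_bigO (flt_tendsto T) (by omega : m ≤ m + 4))).add
    (this.congr_right (fun p => by simp))).congr_left fun p => ?_
  module

lemma IsJ.apply {f : ℝ × ℝ → G →L[ℝ] E} {a b : ℝ → G →L[ℝ] E} {g : ℝ × ℝ → G} {a' b' : ℝ → G}
    (hf : IsJ T m f a b) (hg : IsJ T n g a' b') :
    IsJ T (m + n) (fun p => f p (g p)) (fun s => a s (a' s))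
      (fun s => a s (b' s) + b s (a' s)) := by
  have hgO := hg.bigO
  obtain ⟨h1, h2, c, d, h3, h4, h5⟩ := hf
  obtain ⟨h1', h2', c', d', h3', h4', h5'⟩ := hg
  refine ⟨h1.clm_apply h1', (h1.clm_apply h2').add (h2.clm_apply h1'),
    fun s => a s (c' s) + b s (b' s) + c s (a' s),
    fun s => a s (d' s) + b s (c' s) + c s (b' s) + d s (a' s), ?_, ?_, ?_⟩
  · exact ((h1.clm_apply h3').add (h2.clm_apply h2')).add (h3.clm_apply h1')
  · have i12 : (1 : WithTop ℕ∞) ≤ 2 := by norm_num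
    exact ((((h1.of_le i12).clm_apply h4').add ((h2.of_le i12).clm_apply (h3'.of_le i12))).add
      ((h3.of_le i12).clm_apply (h2'.of_le i12))).add (h4.clm_apply (h1'.of_le i12))
  · have k1 := h1.continuousOn
    have k2 := h2.continuousOn
    have k3 := h3.continuousOn
    have k4 := h4.continuousOn
    have k1' := h1'.continuousOn
    have k2' := h2'.continuousOn
    have k3' := h3'.continuousOn
    have k4' := h4'.continuousOn
    have hP := poly_bigO k1 k2 k3 k4
    have e1 := clm_bigO h5 hgO
    have e2 := (isBigO_refl (fun p : ℝ × ℝ => p.2 ^ m) (flt T)).smul (clm_bigO hP h5')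
    have hR := poly_bigO (T := T) (a := fun s => b s (d' s) + c s (c' s) + d s (b' s))
      (b := fun s => c s (d' s) + d s (c' s)) (c := fun s => d s (d' s)) (d := fun _ => 0)
      (((k2.clm_apply k4').add (k3.clm_apply k3')).add (k4.clm_apply k2'))
      ((k3.clm_apply k4').add (k4.clm_apply k3')) (k4.clm_apply k4') continuousOn_const
    have e3 := (isBigO_refl (fun p : ℝ × ℝ => p.2 ^ (m + n + 4)) (flt T)).smul hR
    refine (((e1.congr_right fun p => ?_).add (e2.congr_right fun p => ?_)).add
      (e3.congr_right (g₂ := fun p => p.2 ^ (m + n + 4)) fun p => ?_)).congr_left fun p => ?_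
    · ring
    · simp only [smul_eq_mul]; ring
    · simp
    · simp only [map_add, map_sub, map_smul, add_apply,
        sub_apply, smul_apply]
      module

lemma IsJ.taylor (hT : 0 < T) (m : ℕ) (v : ℝ → E)
    (hv : ContDiffOn ℝ (m + 4 : ℕ) v (Set.Icc 0 T)) {α : ℝ} (h0 : 0 ≤ α) (h1 : α ≤ 1) :
    IsJ T m (fun p => v (p.1 + α * p.2) - ∑ j ∈ Finset.range m,
      ((α * p.2) ^ j / (j.factorial : ℝ)) • dchain (Set.Icc 0 T) v j p.1)
      (fun s => (α ^ m / (m.factorial : ℝ)) • dchain (Set.Icc 0 T) v m s)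
      (fun s => (α ^ (m+1) / ((m+1).factorial : ℝ)) • dchain (Set.Icc 0 T) v (m+1) s) := by
  obtain ⟨hc, -⟩ := dchain_spec hT _ v hv
  refine ⟨(hc m 2 (by omega)).const_smul _, (hc (m+1) 2 (by omega)).const_smul _,
    (fun s => (α ^ (m+2) / ((m+2).factorial : ℝ)) • dchain (Set.Icc 0 T) v (m+2) s),
    (fun s => (α ^ (m+3) / ((m+3).factorial : ℝ)) • dchain (Set.Icc 0 T) v (m+3) s),
    (hc (m+2) 2 (by omega)).const_smul _, (hc (m+3) 1 (by omega)).const_smul _, ?_⟩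
  obtain ⟨M, hM⟩ := taylor_Icc hT _ v hv
  refine IsBigO.of_bound (M * α ^ (m+4)) ?_
  filter_upwards [flt_mem (T := T) h0 h1, flt_ev T] with p hp hp2
  have := hM _ hp.1 _ hp.2
  have e : p.1 + α * p.2 - p.1 = α * p.2 := by ring
  rw [e, abs_of_nonneg (mul_nonneg h0 hp2.2.1)] at this
  rw [Real.norm_eq_abs, abs_of_nonneg (pow_nonneg hp2.2.1 _), mul_assoc, ← mul_pow]
  refine le_trans (le_of_eq ?_) this
  congr 1
  simp only [Finset.sum_range_succ, mul_pow]
  module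

structure Setup (T r M : ℝ) (F : ℝ → X → X) (u : ℝ → X) (A : ℝ → X →L[ℝ] X)
    (B : ℝ → X →L[ℝ] X →L[ℝ] X) : Prop where
  hT : 0 < T
  hr : 0 < r
  hA : ContDiffOn ℝ 4 A (Set.Icc 0 T)
  hB : ContDiffOn ℝ 4 B (Set.Icc 0 T)
  hu : ContDiffOn ℝ 7 u (Set.Icc 0 T)
  hode : ∀ s ∈ Set.Icc 0 T, F s (u s) = dchain (Set.Icc 0 T) u 1 s
  hE : ∀ s ∈ Set.Icc 0 T, ∀ δ : X, ‖δ‖ ≤ r →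
        ‖F s (u s + δ) - (F s (u s) + A s δ + (1/2 : ℝ) • B s δ δ)‖ ≤ M * ‖δ‖ ^ 3

noncomputable def st2 (F : ℝ → X → X) (t h : ℝ) (x : X) : X := x + (h / 2) • F t x
noncomputable def st3 (F : ℝ → X → X) (t h : ℝ) (x : X) : X :=
  x + (h / 2) • F (t + h / 2) (st2 F t h x)
noncomputable def st4 (F : ℝ → X → X) (t h : ℝ) (x : X) : X :=
  x + h • F (t + h / 2) (st3 F t h x)

lemma rk4Step_eq (F : ℝ → X → X) (t h : ℝ) (x : X) : rk4Step F t h x =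
    x + (h / 6) • (F t x + (2 : ℝ) • F (t + h / 2) (st2 F t h x)
      + (2 : ℝ) • F (t + h / 2) (st3 F t h x) + F (t + h) (st4 F t h x)) := rfl

variable {r M : ℝ} {F : ℝ → X → X} {u : ℝ → X} {A : ℝ → X →L[ℝ] X}
    {B : ℝ → X →L[ℝ] X →L[ℝ] X}

lemma Setup.lin (S : Setup T r M F u A B) {ι : Type*} {l : Filter ι} {h σ : ι → ℝ} {δ : ι → X}
    (hh : Tendsto h l (𝓝 0)) (hσ : ∀ᶠ i in l, σ i ∈ Set.Icc 0 T)
    (hδ : δ =O[l] (fun i => h i ^ 2)) :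
    (fun i => F (σ i) (u (σ i) + δ i) - (F (σ i) (u (σ i)) + A (σ i) (δ i)
      + (1/2 : ℝ) • B (σ i) (δ i) (δ i))) =O[l] (fun i => h i ^ 6) := by
  have h0 : Tendsto δ l (𝓝 0) := hδ.trans_tendsto (by simpa using hh.pow 2)
  have h1 : ∀ᶠ i in l, ‖δ i‖ ≤ r := by
    have := h0.norm
    rw [norm_zero] at this
    exact (this.eventually_lt_const S.hr).mono fun i hi => hi.le
  have h2 : (fun i => F (σ i) (u (σ i) + δ i) - (F (σ i) (u (σ i)) + A (σ i) (δ i)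
      + (1/2 : ℝ) • B (σ i) (δ i) (δ i))) =O[l] (fun i => ‖δ i‖ ^ 3) := by
    refine IsBigO.of_bound M ?_
    filter_upwards [h1, hσ] with i hi hs
    simpa using S.hE _ hs _ hi
  refine h2.trans ((hδ.norm_left.pow 3).congr_right fun i => ?_)
  ring

lemma Setup.kappa (S : Setup T r M F u A B) {α : ℝ} (h0 : 0 ≤ α) (h1 : α ≤ 1) {δ : ℝ × ℝ → X}
    {a b : ℝ → X} (hδ : IsJ T 2 δ a b) :
    IsJ T 2 (fun p => F (p.1 + α * p.2) (u (p.1 + α * p.2) + δ p) -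
        dchain (Set.Icc 0 T) u 1 (p.1 + α * p.2))
      (fun s => A s (a s)) (fun s => A s (b s) + α • dchain (Set.Icc 0 T) A 1 s (a s)) := by
  have hA := IsJ.taylor S.hT 0 A S.hA h0 h1
  have hB := IsJ.taylor S.hT 0 B S.hB h0 h1
  have hlin := S.lin (flt_tendsto T) ((flt_mem (T := T) h0 h1).mono fun p hp => hp.2) hδ.bigO
  have q1 := hA.apply hδ
  have q2 := (((hB.apply hδ).apply hδ).smul (1/2 : ℝ))
  have q2' : IsJ T 2 _ _ _ := (IsJ.lower (IsJ.lower q2))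
  have q1' : IsJ T 2 _ _ _ := q1.of_eq (Eventually.of_forall fun _ => rfl) (fun _ => rfl) (fun _ => rfl)
  refine ((q1'.add q2').add (IsJ.of_bigO (m := 2) hlin)).of_eq ?_ ?_ ?_
  · filter_upwards [flt_mem (T := T) h0 h1] with p hp
    rw [← S.hode _ hp.2]
    simp only [Finset.range_zero, Finset.sum_empty, sub_zero]
    module
  · intro s
    simp [dchain]
  · intro s
    simp [dchain]

lemma Setup.loc (S : Setup T r M F u A B) :
    ((fun p : ℝ × ℝ => st2 F p.1 p.2 (u p.1) - u (p.1 + p.2 / 2)) =O[flt T] fun p => p.2 ^ 2) ∧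
    ((fun p : ℝ × ℝ => st3 F p.1 p.2 (u p.1) - u (p.1 + p.2 / 2)) =O[flt T] fun p => p.2 ^ 2) ∧
    ((fun p : ℝ × ℝ => st4 F p.1 p.2 (u p.1) - u (p.1 + p.2)) =O[flt T] fun p => p.2 ^ 2) ∧
    IsJ T 3 (fun p => rk4Step F p.1 p.2 (u p.1) - u (p.1 + p.2)) (fun _ => 0) (fun _ => 0) := by
  have hz : (0:ℝ) ≤ 1/2 := by norm_num
  have ho : (1/2:ℝ) ≤ 1 := by norm_num
  have hmem := flt_mem (T := T) zero_le_one le_rfl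
  have hT := S.hT
  obtain ⟨hc, -⟩ := dchain_spec hT 7 u S.hu
  have hu6 : ContDiffOn ℝ (2 + 4 : ℕ) u (Set.Icc 0 T) := S.hu.of_le (by norm_num)
  have hu1 : ContDiffOn ℝ (2 + 4 : ℕ) (dchain (Set.Icc 0 T) u 1) (Set.Icc 0 T) := hc 1 6 le_rfl
  have hu1' : ContDiffOn ℝ (1 + 4 : ℕ) (dchain (Set.Icc 0 T) u 1) (Set.Icc 0 T) := hc 1 5 (by omega)
  have dd : ∀ j, dchain (Set.Icc 0 T) (dchain (Set.Icc 0 T) u 1) j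
    = dchain (Set.Icc 0 T) u (j+1) := fun j => rfl
  have d0 : dchain (Set.Icc 0 T) u 0 = u := rfl
  have half : ∀ p : ℝ × ℝ, p.1 + p.2 / 2 = p.1 + 1/2 * p.2 := fun p => by ring
  -- Taylor expansions
  have Th := IsJ.taylor hT 2 u hu6 hz ho
  have T1 := IsJ.taylor hT 2 u hu6 zero_le_one le_rfl
  have Dh := (IsJ.taylor hT 1 _ hu1' hz ho).hsmul
  -- stage 2
  have δ2 : IsJ T 2 (fun p => st2 F p.1 p.2 (u p.1) - u (p.1 + 1/2 * p.2))
      (fun s => (-1/8 : ℝ) • dchain (Set.Icc 0 T) u 2 s)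
      (fun s => (-1/48 : ℝ) • dchain (Set.Icc 0 T) u 3 s) := by
    refine (Th.smul (-1)).of_eq ?_ ?_ ?_
    · filter_upwards [hmem] with p hp
      simp only [st2, S.hode _ hp.1, Finset.sum_range_succ, Finset.range_zero, Finset.sum_empty, d0,
        Nat.factorial]
      push_cast
      module
    · intro s; simp only [Nat.factorial]; push_cast; module
    · intro s; simp only [Nat.factorial]; push_cast; module
  have κ2 := S.kappa hz ho δ2
  have δ3 : IsJ T 2 (fun p => st3 F p.1 p.2 (u p.1) - u (p.1 + 1/2 * p.2))
      (fun s => (1/8 : ℝ) • dchain (Set.Icc 0 T) u 2 s)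
      (fun s => (1/24 : ℝ) • dchain (Set.Icc 0 T) u 3 s
        - (1/16 : ℝ) • A s (dchain (Set.Icc 0 T) u 2 s)) := by
    refine (((Th.smul (-1)).add (Dh.smul (1/2))).add (κ2.hsmul.lower.smul (1/2))).of_eq ?_ ?_ ?_
    · filter_upwards [hmem] with p hp
      simp only [st3, Finset.sum_range_succ, Finset.range_zero, Finset.sum_empty, d0, dd,
        Nat.factorial, half, add_sub_cancel]
      push_cast
      module
    · intro s; simp only [Nat.factorial, dd, map_smul]; push_cast; module
    · intro s; simp only [Nat.factorial, dd, map_smul]; push_cast; module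
  have κ3 := S.kappa hz ho δ3
  have δ4 : IsJ T 2 (fun p => st4 F p.1 p.2 (u p.1) - u (p.1 + 1 * p.2))
      (fun s => 0)
      (fun s => (-1/24 : ℝ) • dchain (Set.Icc 0 T) u 3 s
        + (1/8 : ℝ) • A s (dchain (Set.Icc 0 T) u 2 s)) := by
    refine (((T1.smul (-1)).add (Dh)).add (κ3.hsmul.lower)).of_eq ?_ ?_ ?_
    · filter_upwards [hmem] with p hp
      simp only [st4, Finset.sum_range_succ, Finset.range_zero, Finset.sum_empty, d0, dd,
        Nat.factorial, half, add_sub_cancel]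
      push_cast
      module
    · intro s; simp only [Nat.factorial, dd, map_smul]; push_cast; module
    · intro s; simp only [Nat.factorial, dd, map_smul]; push_cast; module
  have κ4 := S.kappa zero_le_one le_rfl δ4
  refine ⟨?_, ?_, ?_, ?_⟩
  · simpa only [half] using δ2.bigO
  · simpa only [half] using δ3.bigO
  · simpa only [one_mul] using δ4.bigO
  have U3 := IsJ.taylor hT 3 u S.hu zero_le_one le_rfl
  have V3 := (IsJ.taylor hT 2 _ hu1 hz ho).hsmul
  have W3 := (IsJ.taylor hT 2 _ hu1 zero_le_one le_rfl).hsmul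
  refine (((U3.smul (-1)).add ((V3.smul (4/6)).add (W3.smul (1/6)))).add
    ((((κ2.add κ3).smul 2).add κ4).hsmul.smul (1/6))).of_eq ?_ ?_ ?_
  · filter_upwards [hmem] with p hp
    simp only [rk4Step_eq, S.hode _ hp.1, Finset.sum_range_succ, Finset.range_zero,
      Finset.sum_empty, d0, dd, Nat.factorial, half, add_sub_cancel, one_mul]
    push_cast
    module
  · intro s; simp only [Nat.factorial, dd, map_smul, map_zero]; push_cast; module
  · intro s
    simp only [Nat.factorial, dd, map_smul, map_zero, map_add, map_sub]; push_cast; module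

lemma dchain_zero (s : Set ℝ) (v : ℝ → E) : dchain s v 0 = v := rfl

lemma bdd_comp {v : ℝ → E} (hv : ContinuousOn v (Set.Icc 0 T)) {ι : Type*} {l : Filter ι}
    {σ : ι → ℝ} (hσ : ∀ᶠ i in l, σ i ∈ Set.Icc 0 T) :
    (fun i => v (σ i)) =O[l] (fun _ => (1:ℝ)) := by
  obtain ⟨M, hM⟩ := isCompact_Icc.exists_bound_of_continuousOn hv
  refine IsBigO.of_bound M ?_
  filter_upwards [hσ] with p hp
  simpa using hM _ hp

lemma tay_comp (hT : 0 < T) (n : ℕ) {v : ℝ → E} (hv : ContDiffOn ℝ n v (Set.Icc 0 T))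
    {ι : Type*} {l : Filter ι} {h σ t : ι → ℝ} (hσ : ∀ᶠ i in l, σ i ∈ Set.Icc 0 T)
    (ht : ∀ᶠ i in l, t i ∈ Set.Icc 0 T) (hσt : (fun i => σ i - t i) =O[l] h) :
    (fun i => v (σ i) - ∑ j ∈ Finset.range n,
      ((σ i - t i) ^ j / (j.factorial : ℝ)) • dchain (Set.Icc 0 T) v j (t i))
      =O[l] (fun i => h i ^ n) := by
  obtain ⟨M, hM⟩ := taylor_Icc hT n v hv
  refine IsBigO.trans ?_ (hσt.pow n)
  refine IsBigO.of_bound M ?_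
  filter_upwards [hσ, ht] with i h1 h2
  simpa using hM _ h2 _ h1

lemma Setup.dK (S : Setup T r M F u A B) {ι : Type*} {l : Filter ι} {h σ t : ι → ℝ}
    {y y' e : ι → X}
    (hh : Tendsto h l (𝓝 0)) (hσ : ∀ᶠ i in l, σ i ∈ Set.Icc 0 T)
    (ht : ∀ᶠ i in l, t i ∈ Set.Icc 0 T) (hσt : (fun i => σ i - t i) =O[l] h)
    (hy : (fun i => y i - u (σ i)) =O[l] (fun i => h i ^ 2))
    (he : e =O[l] (fun i => h i ^ 5))
    (hη : (fun i => y' i - y i - e i) =O[l] (fun i => h i ^ 6)) :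
    (fun i => F (σ i) (y' i) - F (σ i) (y i) - A (t i) (e i)) =O[l] (fun i => h i ^ 6) := by
  have hη5 : (fun i => y' i - y i) =O[l] (fun i => h i ^ 5) :=
    ((hη.trans (pow_bigO hh (by norm_num))).add he).congr_left fun i => by abel
  have hy' : (fun i => y' i - u (σ i)) =O[l] (fun i => h i ^ 2) :=
    ((hη5.trans (pow_bigO hh (by norm_num))).add hy).congr_left fun i => by abel
  have L := S.lin hh hσ hy
  have L' := S.lin hh hσ hy'
  have hAb := bdd_comp S.hA.continuousOn hσ
  have hBb := bdd_comp S.hB.continuousOn hσ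
  have hAd : (fun i => A (σ i) - A (t i)) =O[l] h := by
    have := tay_comp S.hT 1 (S.hA.of_le (by norm_num)) hσ ht hσt
    simpa [dchain] using this
  have e1 := clm_bigO hAd he
  have e2 := clm_bigO hAb hη
  have e3 := (clm_bigO (clm_bigO hBb hy') hη5).const_smul_left (1/2 : ℝ)
  have e4 := (clm_bigO (clm_bigO hBb hη5) hy).const_smul_left (1/2 : ℝ)
  have w7 : (fun i => 1 * h i ^ 2 * h i ^ 5) =O[l] (fun i => h i ^ 6) :=
    (pow_bigO hh (show 6 ≤ 7 by norm_num)).congr_left fun i => by ring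
  have w7' : (fun i => 1 * h i ^ 5 * h i ^ 2) =O[l] (fun i => h i ^ 6) :=
    (pow_bigO hh (show 6 ≤ 7 by norm_num)).congr_left fun i => by ring
  refine ((((((L'.sub L).add (e1.congr_right fun i => ?_))).add (e2.congr_right fun i => ?_)).add
    (e3.trans w7)).add (e4.trans w7')).congr_left fun i => ?_
  · ring
  · ring
  · simp only [add_sub_cancel, map_sub, sub_apply, Pi.smul_apply]
    module

lemma Setup.pert (S : Setup T r M F u A B) {ι : Type*} {l : Filter ι} {h t : ι → ℝ} {e : ι → X}
    (hl : Tendsto (fun i => (t i, h i)) l (flt T)) (he : e =O[l] (fun i => h i ^ 5)) :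
    (fun i => rk4Step F (t i) (h i) (u (t i) + e i) - rk4Step F (t i) (h i) (u (t i)) - e i
      - h i • A (t i) (e i)) =O[l] (fun i => h i ^ 7) := by
  have hh : Tendsto h l (𝓝 0) := (flt_tendsto T).comp hl
  obtain ⟨s2, s3, s4, -⟩ := S.loc
  replace s2 := s2.comp_tendsto hl
  replace s3 := s3.comp_tendsto hl
  replace s4 := s4.comp_tendsto hl
  have m0 : ∀ᶠ i in l, t i ∈ Set.Icc 0 T :=
    (hl.eventually (flt_mem (T := T) zero_le_one le_rfl)).mono fun i hi => hi.1
  have m1 : ∀ᶠ i in l, t i + h i ∈ Set.Icc 0 T :=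
    (hl.eventually (flt_mem (T := T) zero_le_one le_rfl)).mono fun i hi => by simpa using hi.2
  have mh : ∀ᶠ i in l, t i + h i / 2 ∈ Set.Icc 0 T :=
    (hl.eventually (flt_mem (T := T) (α := 1/2) (by norm_num) (by norm_num))).mono fun i hi => by
      have := hi.2
      rwa [show t i + 1/2 * h i = t i + h i / 2 by ring] at this
  have z0 : (fun i => t i - t i) =O[l] h := by simpa using isBigO_zero h l
  have z1 : (fun i => t i + h i - t i) =O[l] h := by simpa using isBigO_refl h l
  have zh : (fun i => t i + h i / 2 - t i) =O[l] h :=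
    ((isBigO_refl h l).const_mul_left (1/2)).congr_left fun i => by ring
  have hA0 := bdd_comp S.hA.continuousOn m0
  have hAe := clm_bigO hA0 he
  have nxt : ∀ {D : ι → X} (c : ℝ), (fun i => D i - A (t i) (e i)) =O[l] (fun i => h i ^ 6) →
      (fun i => (c * h i) • D i) =O[l] (fun i => h i ^ 6) := by
    intro D c hD
    have h5 : D =O[l] (fun i => h i ^ 5) :=
      ((hD.trans (pow_bigO hh (by norm_num : 5 ≤ 6))).add
        (hAe.congr_right fun i => one_mul _)).congr_left fun i => by abel
    refine (((isBigO_refl h l).const_mul_left c).smul h5).congr_right fun i => ?_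
    simp only [smul_eq_mul]; ring
  have D1 := S.dK (y := fun i => u (t i)) (y' := fun i => u (t i) + e i) hh m0 m0 z0
    (by simpa using isBigO_zero _ l) he (by simpa using isBigO_zero _ l)
  have D2 := S.dK (y := fun i => st2 F (t i) (h i) (u (t i)))
    (y' := fun i => st2 F (t i) (h i) (u (t i) + e i)) hh mh m0 zh s2 he
    ((nxt (1/2) D1).congr_left fun i => by simp only [st2]; module)
  have D3 := S.dK (y := fun i => st3 F (t i) (h i) (u (t i)))
    (y' := fun i => st3 F (t i) (h i) (u (t i) + e i)) hh mh m0 zh s3 he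
    ((nxt (1/2) D2).congr_left fun i => by simp only [st3]; module)
  have D4 := S.dK (y := fun i => st4 F (t i) (h i) (u (t i)))
    (y' := fun i => st4 F (t i) (h i) (u (t i) + e i)) hh m1 m0 z1 s4 he
    ((nxt 1 D3).congr_left fun i => by simp only [st4]; module)
  have tot := ((D1.add (D2.const_smul_left (2:ℝ))).add (D3.const_smul_left (2:ℝ))).add D4
  refine (((isBigO_refl h l).const_mul_left (1/6)).smul tot).congr (fun i => ?_) (fun i => ?_)
  · simp only [rk4Step_eq, Pi.smul_apply]
    module
  · simp only [smul_eq_mul]; ring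

lemma Setup.chain (S : Setup T r M F u A B) : ∃ φ χ ψ : ℝ → X,
    ContinuousOn χ (Set.Icc 0 T) ∧ ∀ i : ℕ, i ≤ 5 →
    (fun p : ℝ × ℝ => rk4Iter F p.1 (p.2 / 5) (u p.1) i - u (p.1 + i * (p.2 / 5))
      - ((p.2/5) ^ 5 • ((i : ℝ) • φ p.1) + (p.2/5) ^ 6 • (((i : ℝ) * (i - 1) / 2) • χ p.1
        + (i : ℝ) • ψ p.1))) =O[flt T] (fun p => (p.2 / 5) ^ 7) := by
  obtain ⟨-, -, -, -, -, φ, ψ, hφ, hψ, hd⟩ := S.loc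
  obtain ⟨hφc, -⟩ := dchain_spec S.hT 2 φ hφ
  have kφ := hφ.continuousOn
  have kψ := hψ.continuousOn
  have kA := S.hA.continuousOn
  have kφ1 : ContinuousOn (dchain (Set.Icc 0 T) φ 1) (Set.Icc 0 T) := (hφc 1 1 le_rfl).continuousOn
  have kχ : ContinuousOn (fun s => dchain (Set.Icc 0 T) φ 1 s + A s (φ s)) (Set.Icc 0 T) :=
    kφ1.add (kA.clm_apply kφ)
  refine ⟨φ, fun s => dchain (Set.Icc 0 T) φ 1 s + A s (φ s), ψ, kχ, ?_⟩
  have hh : Tendsto (fun p : ℝ × ℝ => p.2 / 5) (flt T) (𝓝 0) := by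
    simpa using (flt_tendsto T).div_const 5
  intro i
  induction i with
  | zero => intro _; simpa [rk4Iter] using isBigO_zero _ _
  | succ i ih =>
    intro hi
    specialize ih (by omega)
    have hi4 : (i : ℝ) ≤ 4 := by exact_mod_cast (by omega : i ≤ 4)
    have hi0 : (0 : ℝ) ≤ i := Nat.cast_nonneg i
    have hl : Tendsto (fun p : ℝ × ℝ => (p.1 + i * (p.2 / 5), p.2 / 5)) (flt T) (flt T) := by
      refine tendsto_inf.2 ⟨?_, ?_⟩
      · rw [tendsto_principal]
        filter_upwards [flt_ev T] with p hp
        obtain ⟨a, b, c⟩ := hp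
        refine ⟨?_, ?_, ?_⟩
        · positivity
        · positivity
        · show p.1 + i * (p.2 / 5) + p.2 / 5 ≤ T
          nlinarith
      · rw [tendsto_comap_iff]; exact hh
    have m0 : ∀ᶠ p in flt T, p.1 ∈ Set.Icc 0 T :=
      (flt_mem (T := T) zero_le_one le_rfl).mono fun i hi => hi.1
    have m1 : ∀ᶠ p : ℝ × ℝ in flt T, p.1 + i * (p.2 / 5) ∈ Set.Icc 0 T :=
      (hl.eventually (flt_mem (T := T) zero_le_one le_rfl)).mono fun i hi => hi.1
    have z : (fun p : ℝ × ℝ => p.1 + i * (p.2 / 5) - p.1) =O[flt T] (fun p => p.2 / 5) :=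
      ((isBigO_refl _ (flt T)).const_mul_left (i:ℝ)).congr_left fun p => by ring
    have hφb := bdd_coef kφ
    have hχb := bdd_coef kχ
    have hψb := bdd_coef kψ
    have pw : ∀ {E : Type _} [NormedAddCommGroup E] [NormedSpace ℝ E] (k : ℕ) {w : ℝ × ℝ → E},
      w =O[flt T] (fun _ => (1:ℝ)) →
        (fun p : ℝ × ℝ => (p.2/5)^k • w p) =O[flt T] (fun p => (p.2/5)^k) := by
      intro E _ _ k w hw
      exact ((isBigO_refl (fun p : ℝ × ℝ => (p.2/5)^k) (flt T)).smul hw).congr_right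
        fun p => by simp
    have E6 : (fun p : ℝ × ℝ => rk4Iter F p.1 (p.2 / 5) (u p.1) i - u (p.1 + i * (p.2 / 5))
      - (p.2/5) ^ 5 • ((i : ℝ) • φ p.1)) =O[flt T] (fun p => (p.2 / 5) ^ 6) := by
      have := pw 6 ((hχb.const_smul_left ((i : ℝ) * (i - 1) / 2)).add (hψb.const_smul_left (i:ℝ)))
      refine ((ih.trans (pow_bigO hh (by norm_num : 6 ≤ 7))).add this).congr_left fun p => ?_
      simp only [Pi.smul_apply]
      module
    have E5 : (fun p : ℝ × ℝ => rk4Iter F p.1 (p.2 / 5) (u p.1) i - u (p.1 + i * (p.2 / 5)))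
        =O[flt T] (fun p => (p.2 / 5) ^ 5) := by
      have := pw 5 (hφb.const_smul_left (i:ℝ))
      refine ((E6.trans (pow_bigO hh (by norm_num : 5 ≤ 6))).add this).congr_left fun p => ?_
      simp only [Pi.smul_apply]
      module
    have P := S.pert hl E5
    have Dd := hd.comp_tendsto hl
    have tφ := tay_comp S.hT 2 hφ m1 m0 z
    have tψ := tay_comp S.hT 1 hψ m1 m0 z
    have tA := tay_comp S.hT 1 (S.hA.of_le (by norm_num)) m1 m0 z
    have q1 := ((isBigO_refl (fun p : ℝ × ℝ => (p.2/5)^5) (flt T)).smul tφ)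
    have q2 := ((isBigO_refl (fun p : ℝ × ℝ => (p.2/5)^6) (flt T)).smul tψ)
    have q3 := ((isBigO_refl (fun p : ℝ × ℝ => (p.2/5)) (flt T)).smul (clm_bigO tA E5))
    have q4 := ((isBigO_refl (fun p : ℝ × ℝ => (p.2/5)) (flt T)).smul
      (clm_bigO (bdd_coef kA) E6))
    refine ((((((ih.add P).add Dd).add (q1.congr_right fun p => ?_)).add
      (q2.congr_right fun p => ?_)).add (q3.congr_right fun p => ?_)).add
      (q4.congr_right fun p => ?_)).congr_left fun p => ?_
    · simp only [smul_eq_mul]; ring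
    · simp only [smul_eq_mul]; ring
    · simp only [smul_eq_mul]; ring
    · simp only [smul_eq_mul]; ring
    · have ee : p.1 + ((i + 1 : ℕ) : ℝ) * (p.2 / 5) = p.1 + i * (p.2 / 5) + p.2 / 5 := by
        push_cast; ring
      rw [ee]
      simp only [rk4Iter, Function.comp, add_sub_cancel, add_sub_cancel_left, dchain_zero,
        Finset.sum_range_succ, Finset.range_zero,
        Finset.sum_empty, Nat.factorial, map_sub, map_smul, sub_apply, smul_apply,
        zero_add, pow_zero]
      push_cast
      module

lemma Setup.consist (S : Setup T r M F u A B) {μ : ℝ}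
    (hLip : ∀ t ∈ Set.Icc 0 T, ∀ x y : X, ‖F t x - F t y‖ ≤ μ * ‖x - y‖) :
    (fun p : ℝ × ℝ => dcStep F p.1 p.2 (u p.1) - u (p.1 + p.2)) =O[flt T] (fun p => p.2 ^ 7) := by
  obtain ⟨φ, χ, ψ, kχ, hR⟩ := S.chain
  have hT := S.hT
  obtain ⟨hc, -⟩ := dchain_spec hT 7 u S.hu
  have dd : ∀ j, dchain (Set.Icc 0 T) (dchain (Set.Icc 0 T) u 1) j
    = dchain (Set.Icc 0 T) u (j+1) := fun j => rfl
  have hh := flt_tendsto T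
  have m0 : ∀ᶠ p in flt T, p.1 ∈ Set.Icc 0 T :=
    (flt_mem (T := T) zero_le_one le_rfl).mono fun i hi => hi.1
  have mα : ∀ α : ℝ, 0 ≤ α → α ≤ 1 → ∀ᶠ p : ℝ × ℝ in flt T, p.1 + α * p.2 ∈ Set.Icc 0 T :=
    fun α h0 h1 => (flt_mem (T := T) h0 h1).mono fun i hi => hi.2
  have zα : ∀ α : ℝ, (fun p : ℝ × ℝ => p.1 + α * p.2 - p.1) =O[flt T] (fun p => p.2) :=
    fun α => ((isBigO_refl _ (flt T)).const_mul_left α).congr_left fun p => by ring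
  have Q : ∀ i : ℕ, i ≤ 5 →
    (fun p : ℝ × ℝ => rk4Iter F p.1 (p.2 / 5) (u p.1) i -
      ∑ j ∈ Finset.range 7,
        (((i : ℝ) / 5 * p.2) ^ j / (j.factorial : ℝ)) • dchain (Set.Icc 0 T) u j p.1
      - ((p.2/5) ^ 5 • ((i : ℝ) • φ p.1) + (p.2/5) ^ 6 • (((i : ℝ) * (i - 1) / 2) • χ p.1
        + (i : ℝ) • ψ p.1))) =O[flt T] (fun p => p.2 ^ 7) := by
    intro i hi
    have hi4 : (i : ℝ) ≤ 5 := by exact_mod_cast hi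
    have hi0 : (0 : ℝ) ≤ i := Nat.cast_nonneg i
    have t1 := tay_comp hT 7 S.hu (mα (i/5) (by positivity) (by linarith)) m0 (zα (i/5))
    have r1 : _ =O[flt T] (fun p : ℝ × ℝ => p.2 ^ 7) := (hR i hi).trans
      (((isBigO_refl (fun p : ℝ × ℝ => p.2 ^ 7) (flt T)).const_mul_left ((1/5)^7)).congr_left
        (fun p => by ring))
    refine (r1.add t1).congr_left fun p => ?_
    rw [show p.1 + (i:ℝ) * (p.2 / 5) = p.1 + i / 5 * p.2 by ring]
    simp only [add_sub_cancel_left]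
    abel
  have Q0 := Q 0 (by norm_num)
  have Q1 := Q 1 (by norm_num)
  have Q2 := Q 2 (by norm_num)
  have Q3 := Q 3 (by norm_num)
  have Q4 := Q 4 (by norm_num)
  have Q5 := Q 5 (by norm_num)
  have T7 := tay_comp hT 7 S.hu (mα 1 (by norm_num) (by norm_num)) m0 (zα 1)
  have T6 := tay_comp hT 6 (S.hu.of_le (by norm_num))
    (mα (1/2) (by norm_num) (by norm_num)) m0 (zα (1/2))
  have V6 := (isBigO_refl (fun p : ℝ × ℝ => p.2) (flt T)).smul
    (tay_comp hT 6 (hc 1 6 le_rfl) (mα (1/2) (by norm_num) (by norm_num)) m0 (zα (1/2)))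
  have mh : ∀ᶠ p : ℝ × ℝ in flt T, p.1 + p.2 / 2 ∈ Set.Icc 0 T :=
    (mα (1/2) (by norm_num) (by norm_num)).mono fun p hp => by
      rwa [show p.1 + 1/2 * p.2 = p.1 + p.2 / 2 by ring] at hp
  -- the `a` part
  have HA : (fun p : ℝ × ℝ => dcA (rk4Iter F p.1 (p.2/5) (u p.1)) -
      (u (p.1 + p.2) - u p.1 - p.2 • dchain (Set.Icc 0 T) u 1 (p.1 + p.2 / 2)))
      =O[flt T] (fun p => p.2 ^ 7) := by
    have c := (((((Q0.const_smul_left (-3 : ℝ)).sub Q1).add (Q2.const_smul_left (18:ℝ))).sub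
      (Q3.const_smul_left (18:ℝ))).add Q4).add (Q5.const_smul_left (3:ℝ))
    refine (((c.const_smul_left (125/384 : ℝ)).sub T7).add (V6.congr_right fun p => ?_)).congr_left
      fun p => ?_
    · simp only [smul_eq_mul]; ring
    · rw [show p.1 + p.2 / 2 = p.1 + 1/2 * p.2 by ring, show p.1 + p.2 = p.1 + 1 * p.2 by ring]
      simp only [dcA, Pi.smul_apply, add_sub_cancel_left, dd, dchain_zero, Finset.sum_range_succ,
        Finset.range_zero, Finset.sum_empty, Nat.factorial]
      push_cast
      module
  -- the `b` part
  have HB : (fun p : ℝ × ℝ => u p.1 + (p.2 / 2) • F p.1 (u p.1)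
      + dcB (rk4Iter F p.1 (p.2/5) (u p.1)) - u (p.1 + p.2 / 2))
      =O[flt T] (fun p => p.2 ^ 6) := by
    have c := (((((Q0.const_smul_left (145 : ℝ)).sub (Q1.const_smul_left (387 : ℝ))).add
      (Q2.const_smul_left (402:ℝ))).sub (Q3.const_smul_left (238:ℝ))).add
      (Q4.const_smul_left (93 : ℝ))).sub (Q5.const_smul_left (15:ℝ))
    have c' := (c.const_smul_left (25/768 : ℝ)).trans (pow_bigO hh (by norm_num : 6 ≤ 7))
    have b1 := (isBigO_refl (fun p : ℝ × ℝ => p.2 ^ 6) (flt T)).smul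
      ((bdd_coef kχ).const_smul_left (25/8 * (1/5)^6 : ℝ))
    have b2 := (isBigO_refl (fun p : ℝ × ℝ => p.2 ^ 6) (flt T)).smul
      ((bdd_coef (hc 6 0 (by norm_num)).continuousOn).const_smul_left (-67/14400000 : ℝ))
    refine (((c'.sub T6).add (b1.congr_right fun p => ?_)).add (b2.congr_right fun p => ?_)).congr'
      ?_ EventuallyEq.rfl
    · simp
    · simp
    · filter_upwards [m0] with p hp
      rw [show p.1 + p.2 / 2 = p.1 + 1/2 * p.2 by ring, S.hode _ hp]
      simp only [dcB, Pi.smul_apply, add_sub_cancel_left, dchain_zero, Finset.sum_range_succ,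
        Finset.range_zero, Finset.sum_empty, Nat.factorial]
      push_cast
      module
  have HK : (fun p : ℝ × ℝ => F (p.1 + p.2 / 2) (u p.1 + (p.2 / 2) • F p.1 (u p.1)
      + dcB (rk4Iter F p.1 (p.2/5) (u p.1))) - dchain (Set.Icc 0 T) u 1 (p.1 + p.2 / 2))
      =O[flt T] (fun p => p.2 ^ 6) := by
    refine IsBigO.trans (IsBigO.of_bound μ ?_) HB
    filter_upwards [mh] with p hp
    rw [← S.hode _ hp]
    exact hLip _ hp _ _
  refine (HA.add (((isBigO_refl (fun p : ℝ × ℝ => p.2) (flt T)).smul HK).congr_right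
    fun p => ?_)).congr_left fun p => ?_
  · simp only [smul_eq_mul]; ring
  · simp only [dcStep]
    module

lemma rk4_lip {μ : ℝ} (hT : 0 < T) (hμ : 0 ≤ μ)
    (hLip : ∀ t ∈ Set.Icc 0 T, ∀ x y : X, ‖F t x - F t y‖ ≤ μ * ‖x - y‖) :
    ∃ L ≥ 0, ∀ t h : ℝ, 0 ≤ t → 0 ≤ h → t + h ≤ T → ∀ x y : X,
      ‖(rk4Step F t h x - x) - (rk4Step F t h y - y)‖ ≤ h * (L * ‖x - y‖) := by
  have hq0 : 0 ≤ T * μ := by positivity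
  obtain ⟨q, hq⟩ : ∃ q, q = 1 + T * μ := ⟨_, rfl⟩
  have hq1 : 1 ≤ q := by linarith
  refine ⟨μ * q ^ 3, by positivity, fun t h ht hh hth x y => ?_⟩
  obtain ⟨D, hD⟩ : ∃ D, D = ‖x - y‖ := ⟨_, rfl⟩
  have hD0 : 0 ≤ D := hD ▸ norm_nonneg _
  have nxt : ∀ (c Q : ℝ) (a b : X), 0 ≤ c → c ≤ T → 0 ≤ Q → D ≤ Q → ‖a - b‖ ≤ μ * Q →
      ‖(x + c • a) - (y + c • b)‖ ≤ q * Q := by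
    intro c Q a b hc hcT hQ hDQ hab
    calc ‖(x + c • a) - (y + c • b)‖ = ‖(x - y) + c • (a - b)‖ := by congr 1; module
      _ ≤ ‖x - y‖ + c * ‖a - b‖ := by
        refine (norm_add_le _ _).trans ?_
        rw [norm_smul, Real.norm_eq_abs, abs_of_nonneg hc]
      _ ≤ Q + T * (μ * Q) := by rw [← hD]; gcongr
      _ = q * Q := by rw [hq]; ring
  have I0 : t ∈ Set.Icc 0 T := ⟨ht, by linarith⟩
  have Ih : t + h / 2 ∈ Set.Icc 0 T := ⟨by linarith, by linarith⟩
  have I1 : t + h ∈ Set.Icc 0 T := ⟨by linarith, by linarith⟩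
  have g1 : D ≤ q * D := le_mul_of_one_le_left hD0 hq1
  have g2 : q * D ≤ q * (q * D) := le_mul_of_one_le_left (by positivity) hq1
  have g3 : q * (q * D) ≤ q * (q * (q * D)) := le_mul_of_one_le_left (by positivity) hq1
  have k1 : ‖F t x - F t y‖ ≤ μ * D := by rw [hD]; exact hLip _ I0 _ _
  have s2 : ‖st2 F t h x - st2 F t h y‖ ≤ q * D :=
    nxt (h/2) D _ _ (by linarith) (by linarith) hD0 le_rfl k1
  have k2 : ‖F (t + h/2) (st2 F t h x) - F (t + h/2) (st2 F t h y)‖ ≤ μ * (q * D) :=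
    (hLip _ Ih _ _).trans (by gcongr)
  have s3 : ‖st3 F t h x - st3 F t h y‖ ≤ q * (q * D) :=
    nxt (h/2) _ _ _ (by linarith) (by linarith) (by positivity) g1 k2
  have k3 : ‖F (t + h/2) (st3 F t h x) - F (t + h/2) (st3 F t h y)‖ ≤ μ * (q * (q * D)) :=
    (hLip _ Ih _ _).trans (by gcongr)
  have s4 : ‖st4 F t h x - st4 F t h y‖ ≤ q * (q * (q * D)) :=
    nxt h _ _ _ (by linarith) (by linarith) (by positivity) (g1.trans g2) k3
  have k4 : ‖F (t + h) (st4 F t h x) - F (t + h) (st4 F t h y)‖ ≤ μ * (q * (q * (q * D))) :=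
    (hLip _ I1 _ _).trans (by gcongr)
  have e : (rk4Step F t h x - x) - (rk4Step F t h y - y) = (h / 6) • ((F t x - F t y)
      + (2:ℝ) • (F (t + h/2) (st2 F t h x) - F (t + h/2) (st2 F t h y))
      + (2:ℝ) • (F (t + h/2) (st3 F t h x) - F (t + h/2) (st3 F t h y))
      + (F (t + h) (st4 F t h x) - F (t + h) (st4 F t h y))) := by
    rw [rk4Step_eq, rk4Step_eq]; module
  rw [e, norm_smul, Real.norm_eq_abs, abs_of_nonneg (by positivity), ← hD]
  have n4 : ∀ a b c d : X, ‖a + (2:ℝ) • b + (2:ℝ) • c + d‖ ≤ ‖a‖ + 2 * ‖b‖ + 2 * ‖c‖ + ‖d‖ := by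
    intro a b c d
    refine norm_add₃_le.trans ?_ |>.trans (le_refl _) |> fun h => (norm_add_le _ _).trans
      (add_le_add_left h _)
    simp [norm_smul]
  have w1 : μ * D ≤ μ * (q * (q * (q * D))) := by
    gcongr; exact g1.trans (g2.trans g3)
  have w2 : μ * (q * D) ≤ μ * (q * (q * (q * D))) := by
    gcongr; exact g1.trans g2
  have w3 : μ * (q * (q * D)) ≤ μ * (q * (q * (q * D))) := by gcongr
  calc h / 6 * _ ≤ h / 6 * (6 * (μ * (q * (q * (q * D))))) := by
        gcongr
        refine (n4 _ _ _ _).trans ?_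
        linarith
    _ = _ := by ring

lemma iter_lip {μ : ℝ} (hT : 0 < T) (hμ : 0 ≤ μ)
    (hLip : ∀ t ∈ Set.Icc 0 T, ∀ x y : X, ‖F t x - F t y‖ ≤ μ * ‖x - y‖) (n : ℕ) (hn : n ≤ 5) :
    ∃ c ≥ 0, ∀ i ≤ n, ∀ t k : ℝ, 0 ≤ t → 0 ≤ k → t + k ≤ T → ∀ x y : X,
      ‖(rk4Iter F t (k/5) x i - rk4Iter F t (k/5) y i) - (x - y)‖ ≤ k * (c * ‖x - y‖) := by
  obtain ⟨L, hL, hstep⟩ := rk4_lip (F := F) hT hμ hLip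
  induction n with
  | zero =>
    refine ⟨0, le_rfl, fun i hi t k ht hk htk x y => ?_⟩
    obtain rfl : i = 0 := by omega
    simp [rk4Iter]
  | succ n ih =>
    obtain ⟨c, hc, ih⟩ := ih (by omega)
    have hTc : 0 ≤ T * c := by positivity
    refine ⟨c + L * (1 + T * c), by positivity, fun i hi t k ht hk htk x y => ?_⟩
    have hn0 := norm_nonneg (x - y)
    rcases Nat.lt_or_ge n i with h | h
    · obtain rfl : i = n + 1 := by omega
      have hn4 : (n : ℝ) ≤ 4 := by exact_mod_cast (by omega : n ≤ 4)
      have h1 := ih n le_rfl t k ht hk htk x y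
      have hnk : 0 ≤ (n : ℝ) * (k / 5) := by positivity
      have h2 := hstep (t + n * (k/5)) (k/5) (by positivity) (by positivity) (by nlinarith)
        (rk4Iter F t (k/5) x n) (rk4Iter F t (k/5) y n)
      have h3 : ‖rk4Iter F t (k/5) x n - rk4Iter F t (k/5) y n‖ ≤ (1 + T * c) * ‖x - y‖ := by
        have : ‖rk4Iter F t (k/5) x n - rk4Iter F t (k/5) y n‖ ≤
          ‖(rk4Iter F t (k/5) x n - rk4Iter F t (k/5) y n) - (x - y)‖ + ‖x - y‖ := by
            simpa using norm_add_le
              ((rk4Iter F t (k/5) x n - rk4Iter F t (k/5) y n) - (x - y)) (x - y)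
        have hkT : k * (c * ‖x - y‖) ≤ T * (c * ‖x - y‖) := by gcongr; linarith
        linarith
      have h4 : k / 5 * (L * ‖rk4Iter F t (k/5) x n - rk4Iter F t (k/5) y n‖) ≤
          k * (L * ((1 + T * c) * ‖x - y‖)) := by
        gcongr; linarith
      have e : (rk4Iter F t (k/5) x (n+1) - rk4Iter F t (k/5) y (n+1)) - (x - y) =
        ((rk4Step F (t + n * (k/5)) (k/5) (rk4Iter F t (k/5) x n) - rk4Iter F t (k/5) x n) -
        (rk4Step F (t + n * (k/5)) (k/5) (rk4Iter F t (k/5) y n) - rk4Iter F t (k/5) y n)) +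
        ((rk4Iter F t (k/5) x n - rk4Iter F t (k/5) y n) - (x - y)) := by
          simp only [rk4Iter]; abel
      rw [e]
      refine (norm_add_le _ _).trans ?_
      linarith
    · refine (ih i h t k ht hk htk x y).trans ?_
      gcongr
      have : 0 ≤ L * (1 + T * c) := by positivity
      linarith

lemma norm_comb (z : ℕ → X) (a : ℕ → ℝ) (C : ℝ) (hz : ∀ i ≤ 5, ‖z i‖ ≤ C) :
    ‖∑ i ∈ Finset.range 6, a i • z i‖ ≤ (∑ i ∈ Finset.range 6, |a i|) * C := by
  rw [Finset.sum_mul]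
  refine norm_sum_le_of_le _ fun i hi => ?_
  rw [norm_smul, Real.norm_eq_abs]
  have := hz i (by have := Finset.mem_range.1 hi; omega)
  gcongr

lemma dc_lip {μ : ℝ} (hT : 0 < T) (hμ : 0 ≤ μ)
    (hLip : ∀ t ∈ Set.Icc 0 T, ∀ x y : X, ‖F t x - F t y‖ ≤ μ * ‖x - y‖) :
    ∃ L ≥ 0, ∀ t k : ℝ, 0 ≤ t → 0 ≤ k → t + k ≤ T → ∀ x y : X,
      ‖dcStep F t k x - dcStep F t k y‖ ≤ (1 + L * k) * ‖x - y‖ := by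
  obtain ⟨c, hc, hit⟩ := iter_lip (F := F) hT hμ hLip 5 le_rfl
  have hTc : 0 ≤ T * c := by positivity
  have hTm : 0 ≤ T * μ := by positivity
  refine ⟨15 * c + μ * (1 + T * μ + 42 * (T * c)), by positivity, fun t k ht hk htk x y => ?_⟩
  obtain ⟨D, hD⟩ : ∃ D, D = ‖x - y‖ := ⟨_, rfl⟩
  have hD0 : 0 ≤ D := hD ▸ norm_nonneg _
  obtain ⟨z, hz⟩ : ∃ z : ℕ → X, z = fun i =>
    (rk4Iter F t (k/5) x i - rk4Iter F t (k/5) y i) - (x - y) := ⟨_, rfl⟩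
  have hzb : ∀ i ≤ 5, ‖z i‖ ≤ k * (c * D) := by
    intro i hi; rw [hz, hD]; exact hit i hi t k ht hk htk x y
  have hkcD : 0 ≤ k * (c * D) := by positivity
  have eA : dcA (rk4Iter F t (k/5) x) - dcA (rk4Iter F t (k/5) y) = (125/384 : ℝ) •
      ∑ i ∈ Finset.range 6, ((![-3, -1, 18, -18, 1, 3] : Fin 6 → ℝ) (Fin.ofNat 6 i)) • z i := by
    simp only [Finset.sum_range_succ, Finset.range_zero, Finset.sum_empty, hz, dcA]
    simp [Fin.ofNat]
    module
  have eB : dcB (rk4Iter F t (k/5) x) - dcB (rk4Iter F t (k/5) y) = (25/768 : ℝ) •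
      ∑ i ∈ Finset.range 6,
        ((![145, -387, 402, -238, 93, -15] : Fin 6 → ℝ) (Fin.ofNat 6 i)) • z i := by
    simp only [Finset.sum_range_succ, Finset.range_zero, Finset.sum_empty, hz, dcB]
    simp [Fin.ofNat]
    module
  have nA : ‖dcA (rk4Iter F t (k/5) x) - dcA (rk4Iter F t (k/5) y)‖ ≤ 15 * (k * (c * D)) := by
    have := norm_comb z (fun i => (![-3, -1, 18, -18, 1, 3] : Fin 6 → ℝ) (Fin.ofNat 6 i)) _ hzb
    rw [eA, norm_smul]
    have h2 : (∑ i ∈ Finset.range 6,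
      |(![-3, -1, 18, -18, 1, 3] : Fin 6 → ℝ) (Fin.ofNat 6 i)|) = 44 := by
      simp [Finset.sum_range_succ, Fin.ofNat]; norm_num
    rw [h2] at this
    rw [Real.norm_eq_abs, abs_of_pos (by norm_num : (0:ℝ) < 125/384)]
    linarith
  have nB : ‖dcB (rk4Iter F t (k/5) x) - dcB (rk4Iter F t (k/5) y)‖ ≤ 42 * (k * (c * D)) := by
    have := norm_comb z
      (fun i => (![145, -387, 402, -238, 93, -15] : Fin 6 → ℝ) (Fin.ofNat 6 i)) _ hzb
    rw [eB, norm_smul]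
    have h2 : (∑ i ∈ Finset.range 6,
      |(![145, -387, 402, -238, 93, -15] : Fin 6 → ℝ) (Fin.ofNat 6 i)|) = 1280 := by
      simp [Finset.sum_range_succ, Fin.ofNat]; norm_num
    rw [h2] at this
    rw [Real.norm_eq_abs, abs_of_pos (by norm_num : (0:ℝ) < 25/768)]
    linarith
  have I0 : t ∈ Set.Icc 0 T := ⟨ht, by linarith⟩
  have Ih : t + k / 2 ∈ Set.Icc 0 T := ⟨by linarith, by linarith⟩
  have k1 : ‖F t x - F t y‖ ≤ μ * D := by rw [hD]; exact hLip _ I0 _ _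
  have hY : ‖(x + (k / 2) • F t x + dcB (rk4Iter F t (k/5) x)) -
      (y + (k / 2) • F t y + dcB (rk4Iter F t (k/5) y))‖ ≤ (1 + T * μ + 42 * (T * c)) * D := by
    have e : (x + (k / 2) • F t x + dcB (rk4Iter F t (k/5) x)) -
      (y + (k / 2) • F t y + dcB (rk4Iter F t (k/5) y)) = (x - y) + (k/2) • (F t x - F t y) +
        (dcB (rk4Iter F t (k/5) x) - dcB (rk4Iter F t (k/5) y)) := by module
    rw [e]
    refine norm_add₃_le.trans ?_
    rw [norm_smul, Real.norm_eq_abs, abs_of_nonneg (by positivity), ← hD]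
    have a1 : k / 2 * ‖F t x - F t y‖ ≤ T * (μ * D) := by gcongr; linarith
    have a2 : k * (c * D) ≤ T * (c * D) := by gcongr; linarith
    linarith
  have hK := (hLip _ Ih _ _).trans (mul_le_mul_of_nonneg_left hY hμ)
  have e : dcStep F t k x - dcStep F t k y = (x - y) +
      (dcA (rk4Iter F t (k/5) x) - dcA (rk4Iter F t (k/5) y)) +
      k • (F (t + k/2) (x + (k / 2) • F t x + dcB (rk4Iter F t (k/5) x)) -
        F (t + k/2) (y + (k / 2) • F t y + dcB (rk4Iter F t (k/5) y))) := by
    simp only [dcStep]; module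
  rw [e]
  refine norm_add₃_le.trans ?_
  rw [norm_smul, Real.norm_eq_abs, abs_of_nonneg hk, ← hD]
  have := mul_le_mul_of_nonneg_left hK hk
  linarith

end helpers

/-- **Theorem 4.1: convergence with order six of DC6RK2/4.**
Let `F ∈ C^6([0,T] × X, X)` be Lipschitz in its second variable with constant `μ ≥ 0`,
and suppose the IVP `u' = F(t,u)`, `u(0) = u₀` has a (unique) solution
`u ∈ C^7([0,T], X)`. Then there are constants `C > 0` and `k₀ > 0` such that for every
positive integer `N` with `k = T/N ≤ k₀`, the DC6RK2/4 sequence satisfies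
`‖u^{6,n} - u(t_n)‖ ≤ C k^6` for all `n = 0, …, N`. -/
theorem dc6rk24_order_six
    (T : ℝ) (hT : 0 < T) (F : ℝ → X → X) (μ : ℝ) (hμ : 0 ≤ μ)
    (hF : ContDiffOn ℝ 6 (Function.uncurry F) (Set.Icc 0 T ×ˢ (Set.univ : Set X)))
    (hLip : ∀ t ∈ Set.Icc 0 T, ∀ x y : X, ‖F t x - F t y‖ ≤ μ * ‖x - y‖)
    (u : ℝ → X) (u0 : X)
    (hu : ContDiffOn ℝ 7 u (Set.Icc 0 T))
    (hu0 : u 0 = u0)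
    (hode : ∀ t ∈ Set.Icc 0 T, HasDerivAt u (F t (u t)) t) :
    ∃ C > 0, ∃ k0 > 0, ∀ N : ℕ, 0 < N → T / N ≤ k0 →
      ∀ n : ℕ, n ≤ N →
        ‖dcSeq F u0 (T / N) n - u ((n : ℝ) * (T / N))‖ ≤ C * (T / N) ^ 6 := by
  classical
  have hode' : ∀ s ∈ Set.Icc 0 T, F s (u s) = dchain (Set.Icc 0 T) u 1 s := fun s hs =>
    ((hode s hs).hasDerivWithinAt.derivWithin ((uniqueDiffOn_Icc hT) s hs)).symm
  obtain ⟨A, B, hA, hB, r, hr, M, hE⟩ := F_expand hT F hF u hu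
  have S : Setup T r M F u A B := ⟨hT, hr, hA, hB, hu, hode', hE⟩
  obtain ⟨L, hL, hstab⟩ := dc_lip (F := F) hT hμ hLip
  obtain ⟨C, hC, hcons⟩ := (S.consist hLip).exists_pos
  rw [Asymptotics.isBigOWith_iff, flt, inf_comm, Filter.eventually_inf_principal,
    Filter.eventually_comap, Metric.eventually_nhds_iff] at hcons
  obtain ⟨ε, hε, hcons⟩ := hcons
  refine ⟨T * C * Real.exp (L * T), by positivity, ε / 2, by positivity, ?_⟩
  intro N hN hk n hn
  obtain ⟨k, hkdef⟩ : ∃ k, k = T / N := ⟨_, rfl⟩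
  rw [← hkdef] at hk ⊢
  have hN' : (0:ℝ) < N := by exact_mod_cast hN
  have hk0 : 0 < k := by rw [hkdef]; positivity
  have hkN : N * k = T := by rw [hkdef]; field_simp
  have hq : 1 ≤ 1 + L * k := by have := mul_nonneg hL hk0.le; linarith
  have main : ∀ m : ℕ, m ≤ N →
      ‖dcSeq F u0 k m - u (m * k)‖ ≤ m * (C * k ^ 7) * (1 + L * k) ^ m := by
    intro m
    induction m with
    | zero => intro _; simp [dcSeq, hu0]
    | succ m ih =>
      intro hm
      specialize ih (by omega)
      have hm' : ((m:ℝ) + 1) ≤ N := by exact_mod_cast hm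
      have hmk : (m : ℝ) * k + k ≤ T := by
        rw [← hkN]; nlinarith
      have hmk0 : 0 ≤ (m : ℝ) * k := by positivity
      have c1 := hcons (y := k) (by rw [Real.dist_eq, sub_zero, abs_of_pos hk0]; linarith)
        (m * k, k) rfl ⟨hmk0, hk0.le, hmk⟩
      simp only [norm_pow, Real.norm_eq_abs, abs_of_pos hk0] at c1
      have c2 := hstab (m * k) k hmk0 hk0.le hmk (dcSeq F u0 k m) (u (m * k))
      have e : ((m + 1 : ℕ) : ℝ) * k = m * k + k := by push_cast; ring
      rw [e]
      calc ‖dcSeq F u0 k (m+1) - u (m * k + k)‖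
          ≤ ‖dcStep F (m * k) k (dcSeq F u0 k m) - dcStep F (m * k) k (u (m * k))‖
            + ‖dcStep F (m * k) k (u (m * k)) - u (m * k + k)‖ := by
              simp only [dcSeq]; exact norm_sub_le_norm_sub_add_norm_sub _ _ _
        _ ≤ (1 + L * k) * (m * (C * k ^ 7) * (1 + L * k) ^ m) + C * k ^ 7 := by
              refine add_le_add (c2.trans ?_) c1
              gcongr
        _ ≤ (1 + L * k) * (m * (C * k ^ 7) * (1 + L * k) ^ m)
              + C * k ^ 7 * (1 + L * k) ^ (m + 1) := by
              exact add_le_add le_rfl (le_mul_of_one_le_right (by positivity) (one_le_pow₀ hq))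
        _ = ((m + 1 : ℕ) : ℝ) * (C * k ^ 7) * (1 + L * k) ^ (m + 1) := by
              push_cast; ring
  have hnN : (n : ℝ) ≤ N := by exact_mod_cast hn
  have hexp : (1 + L * k) ^ n ≤ Real.exp (L * T) := by
    calc (1 + L * k) ^ n ≤ (Real.exp (L * k)) ^ n := by
          gcongr
          rw [add_comm]; exact Real.add_one_le_exp _
      _ = Real.exp (n * (L * k)) := by rw [Real.exp_nat_mul]
      _ ≤ Real.exp (L * T) := by
          apply Real.exp_le_exp.2
          rw [← hkN]
          have := mul_le_mul_of_nonneg_right hnN (mul_nonneg hL hk0.le)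
          linarith
  calc ‖dcSeq F u0 k n - u (n * k)‖ ≤ n * (C * k ^ 7) * (1 + L * k) ^ n := main n hn
    _ ≤ N * (C * k ^ 7) * Real.exp (L * T) := by gcongr
    _ = (N * k) * C * Real.exp (L * T) * k ^ 6 := by ring
    _ = T * C * Real.exp (L * T) * k ^ 6 := by rw [hkN]
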